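/- A Peano continuum X is a dendrite (contains no homeomorphic copy of the circle S¹) if and only if X is hereditarily unicoherent, i.e., for every subcontinuum Z ⊆ X and every two subcontinua Y₁, Y₂ ⊆ Z with Z = Y₁ ∪ Y₂, the intersection Y₁ ∩ Y₂ is connected. -/

import Mathlib

open Set

/-!
A complete, locally connected metric space is locally path connected (chains of small connected
sets are refined repeatedly, and the limit of the refinements is a path), and a path between two
distinct points contains an arc: delete loops until none is left, then collapse the intervals on
which the path is constant.

If `X` contains no circle, two arcs `γ`, `δ` with the same end points coincide, since a piece of `γ`
leaving and reentering `δ` would form a circle together with a piece of `δ`. For a connected set `Y`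
and a point `z ∉ Y`, the component of `{z}ᶜ` containing `Y` is open, hence path connected, so two
points of `Y` are joined by an arc avoiding `z`. Hence *the* arc between two points of `Y`
lies in `Y`, and the intersection of two connected sets is arcwise connected. Conversely, the upper
and the lower half of a circle in `X` are connected and meet in two points.
-/

open Filter Topology unitInterval

section Chains

open Relation

theorem reflTransGen_of_eventually_nhds {X : Type*} [TopologicalSpace X] [PreconnectedSpace X]
    {r : X → X → Prop} (hsymm : ∀ x y, r x y → r y x) (hr : ∀ x, ∀ᶠ y in 𝓝 x, r x y) (x y : X) :
    ReflTransGen r x y :=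
  PreconnectedSpace.induction₂' _
    (fun x ↦ (hr x).mono fun _ h ↦ ⟨.single h, .single (hsymm _ _ h)⟩) inferInstance x y

theorem exists_seq_of_reflTransGen {X : Type*} {r : X → X → Prop} (hr : ∀ x, r x x) {x y : X}
    (h : ReflTransGen r x y) :
    ∃ (n : ℕ) (p : ℕ → X), p 0 = x ∧ (∀ k, n ≤ k → p k = y) ∧ ∀ k, r (p k) (p (k + 1)) := by
  induction h using ReflTransGen.head_induction_on with
  | refl => exact ⟨0, fun _ ↦ y, rfl, fun _ _ ↦ rfl, fun _ ↦ hr y⟩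
  | @head x z hxz _ ih =>
    obtain ⟨n, p, rfl, hn, hp⟩ := ih
    refine ⟨n + 1, fun k ↦ Nat.casesOn k x p, rfl, fun k hk ↦ ?_, fun k ↦ ?_⟩
    · obtain ⟨k, rfl⟩ := Nat.exists_eq_add_of_le' (Nat.le_of_add_left_le hk)
      exact hn k (by lia)
    · cases k with
      | zero => exact hxz
      | succ k => exact hp k

theorem rel_div_mod_succ {X : Type*} {r : X → X → Prop} {N : ℕ} (hN : 0 < N) {c : ℕ → ℕ → X}
    (hjoin : ∀ i, c i N = c (i + 1) 0) (hc : ∀ i j, r (c i j) (c i (j + 1))) (k : ℕ) :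
    r (c (k / N) (k % N)) (c ((k + 1) / N) ((k + 1) % N)) := by
  have hstep := hc (k / N) (k % N)
  obtain hlt | heq := (Nat.succ_le_of_lt (Nat.mod_lt k hN)).lt_or_eq
  · have hdivmod : (k + 1) / N = k / N ∧ (k + 1) % N = k % N + 1 :=
      (Nat.div_mod_unique hN).2 ⟨by have := Nat.mod_add_div k N; lia, hlt⟩
    rwa [hdivmod.1, hdivmod.2]
  · have hdivmod : (k + 1) / N = k / N + 1 ∧ (k + 1) % N = 0 :=
      (Nat.div_mod_unique hN).2 ⟨by have := Nat.mod_add_div k N; rw [mul_add]; lia, hN⟩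
    rwa [hdivmod.1, hdivmod.2, ← hjoin, ← congrArg (c (k / N)) heq]

end Chains

section Linked

variable {X : Type*} [PseudoMetricSpace X] {ε η : ℝ} {x y : X}

/-- Two points are `ε`-linked if some preconnected set of diameter at most `ε` contains both. -/
def Linked (ε : ℝ) (x y : X) : Prop :=
  ∃ C : Set X, IsPreconnected C ∧ x ∈ C ∧ y ∈ C ∧ ∀ u ∈ C, ∀ v ∈ C, dist u v ≤ ε

namespace Linked

theorem refl (hε : 0 ≤ ε) (x : X) : Linked ε x x :=
  ⟨{x}, isPreconnected_singleton, rfl, rfl, by rintro u rfl v rfl; rwa [dist_self]⟩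

theorem symm : Linked ε x y → Linked ε y x :=
  fun ⟨C, hC, hx, hy, hdist⟩ ↦ ⟨C, hC, hy, hx, hdist⟩

theorem dist_le : Linked ε x y → dist x y ≤ ε :=
  fun ⟨_, _, hx, hy, hdist⟩ ↦ hdist x hx y hy

theorem eventually_nhds [LocallyConnectedSpace X] (hε : 0 < ε) (x : X) :
    ∀ᶠ y in 𝓝 x, Linked ε x y := by
  have hball : Metric.ball x (ε / 2) ∈ 𝓝 x := Metric.ball_mem_nhds x (half_pos hε)
  filter_upwards [connectedComponentIn_mem_nhds hball] with y hy
  refine ⟨_, isPreconnected_connectedComponentIn,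
    mem_connectedComponentIn (Metric.mem_ball_self (half_pos hε)), hy, fun u hu v hv ↦ ?_⟩
  have hu := Metric.mem_ball.1 (connectedComponentIn_subset _ _ hu)
  have hv := Metric.mem_ball.1 (connectedComponentIn_subset _ _ hv)
  linarith [dist_triangle_right u v x]

end Linked

/-- A sequence of points from `x` to `y`, stationary from the index `n` on, whose consecutive
terms are `ε`-linked. -/
structure IsLinkedChain (ε : ℝ) (x y : X) (n : ℕ) (p : ℕ → X) : Prop where
  zero : p 0 = x
  eq_of_le : ∀ k, n ≤ k → p k = y
  linked : ∀ k, Linked ε (p k) (p (k + 1))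

theorem Linked.exists_isLinkedChain [LocallyConnectedSpace X] (h : Linked ε x y) (hη : 0 < η) :
    ∃ n p, IsLinkedChain η x y n p ∧ (∀ k, dist x (p k) ≤ ε) ∧ (x = y → n = 0) := by
  obtain ⟨C, hC, hx, hy, hdist⟩ := h
  by_cases hxy : x = y
  · subst hxy
    exact ⟨0, fun _ ↦ x, ⟨rfl, fun _ _ ↦ rfl, fun _ ↦ .refl hη.le x⟩,
      fun _ ↦ hdist x hx x hx, fun _ ↦ rfl⟩
  have : PreconnectedSpace C := isPreconnected_iff_preconnectedSpace.1 hC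
  have hchain : Relation.ReflTransGen (fun a b : C ↦ Linked η (a : X) b) ⟨x, hx⟩ ⟨y, hy⟩ :=
    reflTransGen_of_eventually_nhds (fun _ _ ↦ Linked.symm)
      (fun a ↦ continuousAt_subtype_val.eventually (Linked.eventually_nhds hη (a : X))) _ _
  obtain ⟨n, p, hp0, hpn, hp⟩ :=
    exists_seq_of_reflTransGen (fun a : C ↦ Linked.refl hη.le (a : X)) hchain
  exact ⟨n, fun k ↦ p k, ⟨congrArg Subtype.val hp0, fun k hk ↦ congrArg Subtype.val (hpn k hk), hp⟩,
    fun k ↦ hdist x hx _ (p k).2, fun h ↦ absurd h hxy⟩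

theorem IsLinkedChain.exists_refinement [LocallyConnectedSpace X] {M : ℕ} {p : ℕ → X}
    (h : IsLinkedChain ε x y M p) (hη : 0 < η) :
    ∃ N q, 0 < N ∧ IsLinkedChain η x y (M * N) q ∧ ∀ k, dist (p (k / N)) (q k) ≤ ε := by
  choose n c hc hdist hn using fun i ↦ (h.linked i).exists_isLinkedChain hη
  set N := (Finset.range M).sup n + 1
  have hle (i : ℕ) : n i ≤ N := by
    obtain hi | hi := lt_or_ge i M
    · exact (Finset.le_sup (Finset.mem_range.2 hi)).trans (Nat.le_succ _)
    · rw [hn i ((h.eq_of_le i hi).trans (h.eq_of_le _ (hi.trans (Nat.le_succ i))).symm)]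
      exact N.zero_le
  have hN0 : 0 < N := Nat.succ_pos _
  refine ⟨N, fun k ↦ c (k / N) (k % N), hN0, ⟨?_, fun k hk ↦ ?_, ?_⟩, fun k ↦ hdist _ _⟩
  · simp only [Nat.zero_div, Nat.zero_mod, (hc 0).zero, h.zero]
  · have hi : M ≤ k / N := (Nat.le_div_iff_mul_le hN0).2 hk
    have hsucc := h.eq_of_le _ (hi.trans (Nat.le_succ _))
    rw [(hc _).eq_of_le _ ((hn _ ((h.eq_of_le _ hi).trans hsucc.symm)).trans_le (Nat.zero_le _)),
      hsucc]
  · exact rel_div_mod_succ hN0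
      (fun i ↦ by rw [(hc i).eq_of_le N (hle i), (hc (i + 1)).zero]) fun i ↦ (hc i).linked

theorem Linked.exists_refining_chains [LocallyConnectedSpace X] (h : Linked ε x y) (hε : 0 < ε) :
    ∃ (M N : ℕ → ℕ) (p : ℕ → ℕ → X), (∀ k, dist x (p 0 k) ≤ ε) ∧
      (∀ n, 0 < M n) ∧ (∀ n, M (n + 1) = M n * N n) ∧
      (∀ n, IsLinkedChain (ε / 2 ^ n) x y (M n) (p n)) ∧
      ∀ n k, dist (p n (k / N n)) (p (n + 1) k) ≤ ε / 2 ^ n := by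
  have hstep (n : ℕ) (s : {s : ℕ × (ℕ → X) // 0 < s.1 ∧ IsLinkedChain (ε / 2 ^ n) x y s.1 s.2}) :
      ∃ (t : {t : ℕ × (ℕ → X) // 0 < t.1 ∧ IsLinkedChain (ε / 2 ^ (n + 1)) x y t.1 t.2}) (N : ℕ),
        t.1.1 = s.1.1 * N ∧ ∀ k, dist (s.1.2 (k / N)) (t.1.2 k) ≤ ε / 2 ^ n := by
    obtain ⟨N, q, hN, hq, hdist⟩ := s.2.2.exists_refinement (η := ε / 2 ^ (n + 1)) (by positivity)
    exact ⟨⟨(s.1.1 * N, q), Nat.mul_pos s.2.1 hN, hq⟩, N, rfl, hdist⟩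
  have hinit : IsLinkedChain (ε / 2 ^ 0) x y 1 (fun k ↦ if k = 0 then x else y) := by
    refine ⟨rfl, fun k hk ↦ if_neg (by lia), fun k ↦ ?_⟩
    rw [pow_zero, div_one]
    cases k
    exacts [h, .refl hε.le y]
  choose next N hM hdist using hstep
  let s (n : ℕ) : {s : ℕ × (ℕ → X) // 0 < s.1 ∧ IsLinkedChain (ε / 2 ^ n) x y s.1 s.2} :=
    Nat.rec ⟨(1, _), one_pos, hinit⟩ next n
  refine ⟨fun n ↦ (s n).1.1, fun n ↦ N n (s n), fun n ↦ (s n).1.2, fun k ↦ ?_,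
    fun n ↦ (s n).2.1, fun n ↦ hM n _, fun n ↦ (s n).2.2, fun n ↦ hdist n _⟩
  change dist x (if k = 0 then x else y) ≤ ε
  split_ifs
  exacts [(dist_self x).trans_le hε.le, h.dist_le]

theorem dist_floor_le_of_abs_sub_lt_one {p : ℕ → X} {δ : ℝ}
    (hp : ∀ k, dist (p k) (p (k + 1)) ≤ δ) {s t : ℝ} (hst : |s - t| < 1) :
    dist (p ⌊s⌋₊) (p ⌊t⌋₊) ≤ δ := by
  wlog hle : s ≤ t generalizing s t
  · rw [dist_comm]
    exact this (abs_sub_comm s t ▸ hst) (le_of_not_ge hle)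
  have hlt : ⌊t⌋₊ < ⌊s⌋₊ + 2 := by
    rw [Nat.floor_lt' (by simp)]
    push_cast
    linarith [Nat.lt_floor_add_one s, neg_lt_of_abs_lt hst]
  have : ⌊t⌋₊ = ⌊s⌋₊ ∨ ⌊t⌋₊ = ⌊s⌋₊ + 1 := by have := Nat.floor_mono hle; lia
  obtain heq | heq := this
  · rw [heq, dist_self]
    exact dist_nonneg.trans (hp 0)
  · exact heq ▸ hp _

theorem exists_continuous_of_refining_seq [CompleteSpace X] {M N : ℕ → ℕ} {p : ℕ → ℕ → X}
    (hM : ∀ n, 0 < M n) (hMN : ∀ n, M (n + 1) = M n * N n)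
    (hp : ∀ n k, dist (p n k) (p n (k + 1)) ≤ ε / 2 ^ n)
    (hrefine : ∀ n k, dist (p n (k / N n)) (p (n + 1) k) ≤ ε / 2 ^ n) :
    ∃ f : ℝ → X, Continuous f ∧ ∀ n (t : ℝ), dist (p n ⌊t * M n⌋₊) (f t) ≤ 2 * ε / 2 ^ n := by
  have hsucc (t : ℝ) (n : ℕ) :
      dist (p n ⌊t * M n⌋₊) (p (n + 1) ⌊t * M (n + 1)⌋₊) ≤ 2 * ε / 2 / 2 ^ n := by
    have hN : (N n : ℝ) ≠ 0 := by
      have := hMN n ▸ hM (n + 1)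
      exact_mod_cast (Nat.pos_of_mul_pos_left this).ne'
    have hfloor : ⌊t * M (n + 1)⌋₊ / N n = ⌊t * M n⌋₊ := by
      rw [← Nat.floor_div_natCast, hMN, Nat.cast_mul, ← mul_assoc, mul_div_cancel_right₀ _ hN]
    rw [← hfloor, mul_div_cancel_left₀ _ two_ne_zero]
    exact hrefine n _
  choose f hf using fun t ↦
    cauchySeq_tendsto_of_complete (cauchySeq_of_le_geometric_two (hsucc t))
  have hdist (n : ℕ) (t : ℝ) : dist (p n ⌊t * M n⌋₊) (f t) ≤ 2 * ε / 2 ^ n :=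
    dist_le_of_le_geometric_two_of_tendsto (hsucc t) (hf t) n
  refine ⟨f, Metric.continuous_iff.2 fun t e he ↦ ?_, hdist⟩
  obtain ⟨n, hn⟩ : ∃ n : ℕ, 5 * ε / 2 ^ n < e :=
    (((tendsto_pow_atTop_atTop_of_one_lt one_lt_two).const_div_atTop
      (5 * ε)).eventually_lt_const he).exists
  have hMn : (0 : ℝ) < M n := by exact_mod_cast hM n
  refine ⟨1 / M n, by positivity, fun s hst ↦ lt_of_le_of_lt ?_ hn⟩
  have hclose : |s * M n - t * M n| < 1 := by
    rw [← sub_mul, abs_mul, abs_of_pos hMn]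
    exact (lt_div_iff₀ hMn).1 hst
  calc dist (f s) (f t)
      ≤ dist (f s) (p n ⌊s * M n⌋₊) + dist (p n ⌊s * M n⌋₊) (p n ⌊t * M n⌋₊)
          + dist (p n ⌊t * M n⌋₊) (f t) := dist_triangle4 _ _ _ _
    _ ≤ 2 * ε / 2 ^ n + ε / 2 ^ n + 2 * ε / 2 ^ n := by
      gcongr
      · exact dist_comm (f s) _ ▸ hdist n s
      · exact dist_floor_le_of_abs_sub_lt_one (hp n) hclose
      · exact hdist n t
    _ = 5 * ε / 2 ^ n := by ring

end Linked

section LocallyPathConnected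

variable {X : Type*} [MetricSpace X] [CompleteSpace X] [LocallyConnectedSpace X]

theorem Linked.exists_path {ε : ℝ} {x y : X} (h : Linked ε x y) (hε : 0 < ε) :
    ∃ γ : Path x y, ∀ t, dist x (γ t) ≤ 3 * ε := by
  obtain ⟨M, N, p, hp0, hM, hMN, hp, hrefine⟩ := h.exists_refining_chains hε
  obtain ⟨f, hf, hdist⟩ :=
    exists_continuous_of_refining_seq hM hMN (fun n k ↦ ((hp n).linked k).dist_le) hrefine
  have heq {z : X} {t : ℝ} (hz : ∀ n, p n ⌊t * M n⌋₊ = z) : f t = z := by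
    have hlim : Tendsto (fun n : ℕ ↦ 2 * ε / 2 ^ n) atTop (𝓝 0) :=
      (tendsto_pow_atTop_atTop_of_one_lt one_lt_two).const_div_atTop _
    exact (dist_le_zero.1 (ge_of_tendsto' hlim fun n ↦ hz n ▸ hdist n t)).symm
  refine ⟨⟨⟨fun t ↦ f t, by fun_prop⟩, heq fun n ↦ ?_, heq fun n ↦ ?_⟩, fun t ↦ ?_⟩
  · rw [Icc.coe_zero, zero_mul, Nat.floor_zero, (hp n).zero]
  · rw [Icc.coe_one, one_mul, Nat.floor_natCast, (hp n).eq_of_le _ le_rfl]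
  · calc dist x (f t) ≤ dist x (p 0 ⌊(t : ℝ) * M 0⌋₊) + dist (p 0 ⌊(t : ℝ) * M 0⌋₊) (f t) :=
          dist_triangle _ _ _
      _ ≤ ε + 2 * ε / 2 ^ 0 := add_le_add (hp0 _) (hdist 0 t)
      _ = 3 * ε := by ring

theorem locallyPathConnectedSpace_of_completeSpace : LocallyPathConnectedSpace X := by
  refine locallyPathConnectedSpace_iff_pathComponentIn_mem_nhds.2 fun x U hU hx ↦ ?_
  obtain ⟨r, hr, hrU⟩ := Metric.isOpen_iff.1 hU x hx
  filter_upwards [Linked.eventually_nhds (by positivity : 0 < r / 4) x] with y hy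
  obtain ⟨γ, hγ⟩ := hy.exists_path (by positivity)
  refine ⟨γ, fun t ↦ hrU ?_⟩
  rw [Metric.mem_ball']
  linarith [hγ t]

end LocallyPathConnected

theorem exists_gap_of_inter_Icc_subset_union {α : Type*} [LinearOrder α] [TopologicalSpace α]
    [OrderClosedTopology α] {K U V : Set α} {a b : α} (hK : IsCompact K)
    (hU : IsOpen U) (hV : IsOpen V) (hUV : Disjoint U V) (hcover : K ∩ Icc a b ⊆ U ∪ V)
    (ha : a ∈ K ∩ U) (hb : b ∈ K ∩ V) (hab : a ≤ b) :
    ∃ a' ∈ K ∩ U, ∃ b' ∈ K ∩ V, a' < b' ∧ Disjoint K (Ioo a' b') := by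
  obtain ⟨b', ⟨⟨hb'K, hab', hb'b⟩, hb'U⟩, hb'⟩ :=
    ((hK.inter_right isClosed_Icc).diff hU).exists_isLeast
      ⟨b, ⟨hb.1, hab, le_rfl⟩, hUV.notMem_of_mem_right hb.2⟩
  obtain ⟨a', ⟨⟨ha'K, haa', ha'b'⟩, ha'V⟩, ha'⟩ :=
    ((hK.inter_right (isClosed_Icc (a := a) (b := b'))).diff hV).exists_isGreatest
      ⟨a, ⟨ha.1, le_rfl, hab'⟩, hUV.notMem_of_mem_left ha.2⟩
  have hb'V : b' ∈ V := (hcover ⟨hb'K, hab', hb'b⟩).resolve_left hb'U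
  have ha'U : a' ∈ U := (hcover ⟨ha'K, haa', ha'b'.trans hb'b⟩).resolve_right ha'V
  refine ⟨a', ⟨ha'K, ha'U⟩, b', ⟨hb'K, hb'V⟩, ha'b'.lt_of_ne fun h ↦ ha'V (h ▸ hb'V),
    disjoint_left.2 fun z hzK hz ↦ ?_⟩
  have haz : a ≤ z := haa'.trans hz.1.le
  have hzU : z ∈ U := by
    by_contra hzU
    exact hz.2.not_ge (hb' ⟨⟨hzK, haz, hz.2.le.trans hb'b⟩, hzU⟩)
  exact hz.1.not_ge (ha' ⟨⟨hzK, haz, hz.2.le⟩, hUV.notMem_of_mem_left hzU⟩)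

theorem isClosed_setOf_no_mem_between {α : Type*} [LinearOrder α] [TopologicalSpace α]
    [OrderClosedTopology α] {K : Set α} (hK : IsClosed K) :
    IsClosed {p : α × α | p.2 ∈ K ∧ ∀ u ∈ K, ¬(p.1 < u ∧ u < p.2) ∧ ¬(p.2 < u ∧ u < p.1)} := by
  simp only [ofPred_and, ofPred_forall]
  refine (hK.preimage continuous_snd).inter (isClosed_biInter fun u _ ↦ IsClosed.inter ?_ ?_)
  · exact ((isOpen_lt continuous_fst continuous_const).inter
      (isOpen_lt continuous_const continuous_snd)).isClosed_compl
  · exact ((isOpen_lt continuous_snd continuous_const).inter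
      (isOpen_lt continuous_const continuous_fst)).isClosed_compl

section LoopErasure

variable {α X : Type*} [LinearOrder α] [TopologicalSpace α] [BoundedOrder α]

/-- A closed set `K` of parameters containing both end points is a loop erasure of `f` if `f` takes
the same value at the two ends of every gap of `K`. Each gap is the parameter interval of a loop
of `f`, and skipping these loops still leads from `f ⊥` to `f ⊤`. -/
structure IsLoopErasure (f : α → X) (K : Set α) : Prop where
  isClosed : IsClosed K
  bot_mem : ⊥ ∈ K
  top_mem : ⊤ ∈ K
  eq_of_gap : ∀ a ∈ K, ∀ b ∈ K, a < b → Disjoint K (Ioo a b) → f a = f b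

variable {f : α → X} {K : Set α}

theorem isLoopErasure_univ [DenselyOrdered α] (f : α → X) : IsLoopErasure f univ where
  isClosed := isClosed_univ
  bot_mem := mem_univ _
  top_mem := mem_univ _
  eq_of_gap _ _ _ _ hab hgap := absurd (univ_disjoint.1 hgap) (nonempty_Ioo.2 hab).ne_empty

variable [OrderTopology α]

namespace IsLoopErasure

theorem diff_Ioo (hK : IsLoopErasure f K) {s t : α} (hs : s ∈ K) (ht : t ∈ K)
    (hst : f s = f t) : IsLoopErasure f (K \ Ioo s t) where
  isClosed := hK.isClosed.sdiff isOpen_Ioo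
  bot_mem := ⟨hK.bot_mem, fun h ↦ not_lt_bot h.1⟩
  top_mem := ⟨hK.top_mem, fun h ↦ not_top_lt h.2⟩
  eq_of_gap a ha b hb hab hgap := by
    have hmem {u : α} (hu : u ∈ K) (hau : a < u) (hub : u < b) : u ∈ Ioo s t := by
      by_contra hust
      exact disjoint_left.1 hgap ⟨hu, hust⟩ ⟨hau, hub⟩
    by_cases hmeet : a < t ∧ s < b
    · have has : a ≤ s := not_lt.1 fun h ↦ ha.2 ⟨h, hmeet.1⟩
      have htb : t ≤ b := not_lt.1 fun h ↦ hb.2 ⟨hmeet.2, h⟩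
      have hsa : a = s := has.eq_of_not_lt fun h ↦ (hmem hs h hmeet.2).1.false
      have htb : t = b := htb.eq_of_not_lt fun h ↦ (hmem ht hmeet.1 h).2.false
      rw [hsa, hst, htb]
    · refine hK.eq_of_gap a ha.1 b hb.1 hab (disjoint_left.2 fun u hu h ↦ hmeet ?_)
      have := hmem hu h.1 h.2
      exact ⟨h.1.trans this.2, this.1.trans h.2⟩

theorem disjoint_Ioo_of_minimal (hK : Minimal (IsLoopErasure f) K) {s t : α} (hs : s ∈ K)
    (ht : t ∈ K) (hst : f s = f t) : Disjoint K (Ioo s t) :=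
  disjoint_left.2 fun _ hx ↦ (hK.le_of_le (hK.prop.diff_Ioo hs ht hst) sdiff_subset hx).2

end IsLoopErasure

variable [TopologicalSpace X]

theorem isLoopErasure_sInter [CompactSpace α] [T2Space X] (hf : Continuous f) {c : Set (Set α)}
    (hc : ∀ K ∈ c, IsLoopErasure f K) (hchain : IsChain (· ⊆ ·) c) (hne : c.Nonempty) :
    IsLoopErasure f (⋂₀ c) where
  isClosed := isClosed_sInter fun K hK ↦ (hc K hK).isClosed
  bot_mem K hK := (hc K hK).bot_mem
  top_mem K hK := (hc K hK).top_mem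
  eq_of_gap a ha b hb hab hgap := by
    by_contra hfab
    obtain ⟨U, V, hU, hV, haU, hbV, hUV⟩ := t2_separation hfab
    have hfU := hU.preimage hf
    have hfV := hV.preimage hf
    have hopen : IsOpen ((Icc a b)ᶜ ∪ (f ⁻¹' U ∪ f ⁻¹' V)) :=
      isClosed_Icc.isOpen_compl.union (hfU.union hfV)
    have hsub : ⋂₀ c ⊆ (Icc a b)ᶜ ∪ (f ⁻¹' U ∪ f ⁻¹' V) := by
      refine fun x hx ↦ or_iff_not_imp_left.2 fun hxab ↦ ?_
      obtain rfl | rfl | hxIoo := eq_endpoints_or_mem_Ioo_of_mem_Icc (not_not.1 hxab)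
      exacts [.inl haU, .inr hbV, absurd hxIoo (disjoint_left.1 hgap hx)]
    have : Nonempty c := hne.to_subtype
    have hdir : DirectedOn (fun K L : Set α ↦ K ⊇ L) c := IsChain.directedOn hchain.symm
    obtain ⟨⟨K, hK⟩, hKsub⟩ := exists_subset_nhds_of_isCompact
      (directedOn_iff_directed.1 hdir) (fun K ↦ (hc K K.2).isClosed.isCompact)
      (fun x hx ↦ hopen.mem_nhds (hsub (sInter_eq_iInter ▸ hx)))
    obtain ⟨a', ⟨ha'K, ha'U⟩, b', ⟨hb'K, hb'V⟩, hab', hgap'⟩ :=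
      exists_gap_of_inter_Icc_subset_union (hc K hK).isClosed.isCompact hfU hfV
        (hUV.preimage f) (fun x hx ↦ (hKsub hx.1).resolve_left (not_not.2 hx.2))
        ⟨ha K hK, haU⟩ ⟨hb K hK, hbV⟩ hab.le
    exact hUV.ne_of_mem ha'U hb'V ((hc K hK).eq_of_gap a' ha'K b' hb'K hab' hgap')

theorem exists_minimal_isLoopErasure [CompactSpace α] [DenselyOrdered α] [T2Space X]
    (hf : Continuous f) : ∃ K, Minimal (IsLoopErasure f) K := by
  obtain ⟨K, -, hK⟩ := zorn_superset_nonempty {K | IsLoopErasure f K}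
    (fun c hc hchain hne ↦ ⟨⋂₀ c, isLoopErasure_sInter hf hc hchain hne,
      fun _ ↦ sInter_subset_of_mem⟩) univ (isLoopErasure_univ f)
  exact ⟨K, hK⟩

theorem IsLoopErasure.continuous_comp_isGreatest [CompactSpace α] (hK : IsLoopErasure f K)
    (hf : Continuous f) {l : α → α} (hl : ∀ x, IsGreatest (K ∩ Iic x) (l x)) :
    Continuous (f ∘ l) := by
  -- `l` itself jumps at the right end of each gap of `K`. Admitting both ends as values on
  -- the whole gap gives a closed relation, on which `f` is still single-valued.
  let G : Set (α × α) :=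
    {p | p.2 ∈ K ∧ ∀ u ∈ K, ¬(p.1 < u ∧ u < p.2) ∧ ¬(p.2 < u ∧ u < p.1)}
  have hG : IsClosed G := isClosed_setOf_no_mem_between hK.isClosed
  have hlG (x : α) : (x, l x) ∈ G :=
    ⟨(hl x).1.1, fun u hu ↦ ⟨fun h ↦ (h.1.trans h.2).not_ge (hl x).1.2,
      fun h ↦ h.1.not_ge ((hl x).2 ⟨hu, h.2.le⟩)⟩⟩
  have hfG {x k : α} (h : (x, k) ∈ G) : f k = f (l x) := by
    obtain ⟨hk : k ∈ K, hgap : ∀ u ∈ K, ¬(x < u ∧ u < k) ∧ ¬(k < u ∧ u < x)⟩ := h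
    obtain hkx | hxk := le_or_gt k x
    · obtain heq | hlt := ((hl x).2 ⟨hk, hkx⟩).eq_or_lt
      · rw [heq]
      · have hlx : l x = x :=
          (hl x).1.2.eq_of_not_lt fun h ↦ (hgap _ (hl x).1.1).2 ⟨hlt, h⟩
        exact hK.eq_of_gap k hk _ (hl x).1.1 hlt
          (disjoint_left.2 fun u hu h ↦ (hgap u hu).2 ⟨h.1, h.2.trans_eq hlx⟩)
    · refine (hK.eq_of_gap _ (hl x).1.1 k hk ((hl x).1.2.trans_lt hxk)
        (disjoint_left.2 fun u hu h ↦ ?_)).symm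
      obtain hux | hxu := le_or_gt u x
      exacts [h.1.not_ge ((hl x).2 ⟨hu, hux⟩), (hgap u hu).1 ⟨hxu, h.2⟩]
  refine continuous_iff_isClosed.2 fun C hC ↦ ?_
  have himage : (f ∘ l) ⁻¹' C = Prod.fst '' (G ∩ {p | f p.2 ∈ C}) := by
    ext x
    constructor
    · exact fun hx ↦ ⟨(x, l x), ⟨hlG x, hx⟩, rfl⟩
    · rintro ⟨⟨x, k⟩, ⟨hxk, hk⟩, rfl⟩
      exact mem_preimage.2 (mem_of_eq_of_mem (hfG hxk).symm hk)
  rw [himage]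
  exact ((hG.inter (hC.preimage (hf.comp continuous_snd))).isCompact.image
    continuous_fst).isClosed

theorem exists_continuous_ordConnected_fibers [CompactSpace α] [DenselyOrdered α] [T2Space X]
    (hf : Continuous f) :
    ∃ g : α → X, Continuous g ∧ g ⊥ = f ⊥ ∧ g ⊤ = f ⊤ ∧ range g ⊆ range f ∧
      ∀ z, OrdConnected (g ⁻¹' {z}) := by
  obtain ⟨K, hK⟩ := exists_minimal_isLoopErasure hf
  choose l hl using fun x ↦ (hK.prop.isClosed.isCompact.inter_right
    isClosed_Iic).exists_isGreatest ⟨⊥, hK.prop.bot_mem, (bot_le : ⊥ ≤ x)⟩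
  have hmono : Monotone l := fun x y hxy ↦ (hl y).2 ⟨(hl x).1.1, (hl x).1.2.trans hxy⟩
  refine ⟨f ∘ l, hK.prop.continuous_comp_isGreatest hf hl, congrArg f (le_bot_iff.1 (hl ⊥).1.2),
    congrArg f (top_le_iff.1 ((hl ⊤).2 ⟨hK.prop.top_mem, le_rfl⟩)), range_comp_subset_range l f,
    fun z ↦ ⟨fun x hx y hy t ht ↦ ?_⟩⟩
  have hgap := IsLoopErasure.disjoint_Ioo_of_minimal hK (hl x).1.1 (hl y).1.1
    (hx.trans hy.symm)
  obtain heq | heq | hmem := eq_endpoints_or_mem_Ioo_of_mem_Icc ⟨hmono ht.1, hmono ht.2⟩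
  · exact (congrArg f heq).trans hx
  · exact (congrArg f heq).trans hy
  · exact absurd hmem (disjoint_left.1 hgap (hl t).1.1)

end LoopErasure

section Arcs

theorem continuous_infDist_image_Ici {α X : Type*} [LinearOrder α] [TopologicalSpace α]
    [OrderClosedTopology α] [CompactSpace α] [PseudoMetricSpace X] {g : α → X}
    (hg : Continuous g) : Continuous fun p : X × α ↦ Metric.infDist p.1 (g '' Ici p.2) := by
  have heq (p : X × α) : Metric.infDist p.1 (g '' Ici p.2) =
      sInf ((fun u ↦ dist p.1 (g (max u p.2))) '' univ) := by
    have hIci : Ici p.2 = (max · p.2) '' univ := by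
      ext t
      refine ⟨fun ht ↦ ⟨t, mem_univ t, max_eq_left ht⟩, ?_⟩
      rintro ⟨u, -, rfl⟩
      exact le_max_right u p.2
    rw [hIci, image_image, Metric.infDist_eq_iInf, ← sInf_image', image_image]
  simp only [heq]
  exact isCompact_univ.continuous_sInf (by fun_prop)

section TailDistance

variable {X : Type*} [MetricSpace X] {g : I → X}

/-- The mean distance from a point of the path `g` to the tail of `g` from the time `t` on. As a
function of `t` it is monotone, and it increases strictly whenever `g` leaves a point for good,
which makes it a parameter for the image of `g`. The integral is over `ℝ`, so `g` enters through
`projIcc`. -/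
noncomputable def meanDistTail (g : I → X) (t : I) : ℝ :=
  ∫ r in (0 : ℝ)..1, Metric.infDist (g (projIcc 0 1 zero_le_one r)) (g '' Ici t)

theorem continuous_meanDistTail (hg : Continuous g) : Continuous (meanDistTail g) := by
  have hcont : Continuous (Function.uncurry fun (t : I) (r : ℝ) ↦
      Metric.infDist (g (projIcc 0 1 zero_le_one r)) (g '' Ici t)) :=
    (continuous_infDist_image_Ici hg).comp₂ (by fun_prop) continuous_fst
  exact intervalIntegral.continuous_parametric_intervalIntegral_of_continuous' hcont 0 1

theorem meanDistTail_lt (hg : Continuous g) (hfib : ∀ z, OrdConnected (g ⁻¹' {z})) {s t : I}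
    (hst : s < t) (hne : g s ≠ g t) : meanDistTail g s < meanDistTail g t := by
  have hcont (t : I) : Continuous fun r : ℝ ↦
      Metric.infDist (g (projIcc 0 1 zero_le_one r)) (g '' Ici t) :=
    (Metric.continuous_infDist_pt _).comp (hg.comp continuous_projIcc)
  refine intervalIntegral.integral_lt_integral_of_continuousOn_of_le_of_exists_lt one_pos
    (hcont s).continuousOn (hcont t).continuousOn (fun r _ ↦ ?_) ⟨s, s.2, ?_⟩
  · exact Metric.infDist_le_infDist_of_subset (image_mono (Ici_subset_Ici.2 hst.le))
      (nonempty_Ici.image g)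
  · rw [projIcc_val, Metric.infDist_zero_of_mem (mem_image_of_mem g self_mem_Ici)]
    have hclosed : IsClosed (g '' Ici t) := (isClosed_Ici.isCompact.image hg).isClosed
    refine (hclosed.notMem_iff_infDist_pos (nonempty_Ici.image g)).1 ?_
    rintro ⟨u, hu, hus⟩
    exact hne ((hfib (g s)).out rfl hus ⟨hst.le, hu⟩).symm

theorem meanDistTail_congr (hfib : ∀ z, OrdConnected (g ⁻¹' {z})) {s t : I}
    (h : g s = g t) : meanDistTail g s = meanDistTail g t := by
  wlog hst : s ≤ t generalizing s t
  · exact (this h.symm (le_of_not_ge hst)).symm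
  have himage : g '' Ici s = g '' Ici t := by
    refine (image_subset_iff.2 fun u hu ↦ ?_).antisymm (image_mono (Ici_subset_Ici.2 hst))
    obtain hut | htu := le_or_gt u t
    · exact ⟨t, self_mem_Ici, ((hfib (g t)).out h rfl ⟨hu, hut⟩).symm⟩
    · exact ⟨u, htu.le, rfl⟩
  rw [meanDistTail, himage, meanDistTail]

theorem meanDistTail_eq_iff (hg : Continuous g) (hfib : ∀ z, OrdConnected (g ⁻¹' {z})) {s t : I} :
    meanDistTail g s = meanDistTail g t ↔ g s = g t := by
  refine ⟨fun h ↦ ?_, meanDistTail_congr hfib⟩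
  by_contra hne
  obtain hst | rfl | hts := lt_trichotomy s t
  exacts [(meanDistTail_lt hg hfib hst hne).ne h, hne rfl,
    (meanDistTail_lt hg hfib hts (Ne.symm hne)).ne h.symm]

theorem monotone_meanDistTail (hg : Continuous g) (hfib : ∀ z, OrdConnected (g ⁻¹' {z})) :
    Monotone (meanDistTail g) := by
  intro s t hst
  by_cases heq : g s = g t
  · exact (meanDistTail_congr hfib heq).le
  · exact (meanDistTail_lt hg hfib (hst.lt_of_ne (ne_of_apply_ne g heq)) heq).le

theorem exists_continuousMap_surjective_eq_iff (hg : Continuous g)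
    (hfib : ∀ z, OrdConnected (g ⁻¹' {z})) (hne : g 0 ≠ g 1) :
    ∃ φ : C(I, I), Function.Surjective φ ∧ φ 0 = 0 ∧ φ 1 = 1 ∧ ∀ s t, φ s = φ t ↔ g s = g t := by
  have hlt := meanDistTail_lt hg hfib zero_lt_one hne
  have hmono := monotone_meanDistTail hg hfib
  have hcont := continuous_meanDistTail hg
  let e := iccHomeoI (meanDistTail g 0) (meanDistTail g 1) hlt
  let φ : C(I, I) := ⟨fun t ↦ e ⟨meanDistTail g t, hmono nonneg', hmono le_one'⟩,
    e.continuous.comp (hcont.subtype_mk _)⟩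
  have hφ0 : φ 0 = 0 := by
    ext
    simp [φ, e]
  have hφ1 : φ 1 = 1 := by
    ext
    simp [φ, e, (sub_pos.2 hlt).ne']
  refine ⟨φ, fun t ↦ ?_, hφ0, hφ1, fun s t ↦ ?_⟩
  · exact mem_range_of_exists_le_of_exists_ge φ.continuous ⟨0, hφ0.trans_le nonneg'⟩
      ⟨1, le_one'.trans_eq hφ1.symm⟩
  · rw [← meanDistTail_eq_iff hg hfib]
    exact e.injective.eq_iff.trans Subtype.mk_eq_mk

end TailDistance

theorem exists_injective_path_of_ordConnected_fibers {X : Type*} [MetricSpace X] {x y : X}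
    (γ : Path x y) (hfib : ∀ z, OrdConnected (γ ⁻¹' {z})) (hne : x ≠ y) :
    ∃ δ : Path x y, Function.Injective δ ∧ range δ = range γ := by
  obtain ⟨φ, hφ, hφ0, hφ1, heq⟩ :=
    exists_continuousMap_surjective_eq_iff γ.continuous hfib (by simpa using hne)
  have hquot : IsQuotientMap φ := φ.continuous.isClosedMap.isQuotientMap φ.continuous hφ
  have hfactors : Function.FactorsThrough γ φ := fun s t h ↦ (heq s t).1 h
  let δ : C(I, X) := hquot.lift γ.toContinuousMap hfactors
  have hδ (t : I) : δ (φ t) = γ t :=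
    DFunLike.congr_fun (hquot.lift_comp γ.toContinuousMap hfactors) t
  refine ⟨⟨δ, ?_, ?_⟩, hφ.forall₂.2 fun s t h ↦ ?_, ?_⟩
  · simpa [hφ0] using hδ 0
  · simpa [hφ1] using hδ 1
  · exact (heq s t).2 ((hδ s).symm.trans (h.trans (hδ t)))
  · change range δ = range γ
    rw [← hφ.range_comp δ]
    exact congrArg range (funext hδ)

theorem exists_injective_path {X : Type*} [MetricSpace X] {x y : X} (γ : Path x y) (hne : x ≠ y) :
    ∃ δ : Path x y, Function.Injective δ ∧ range δ ⊆ range γ := by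
  obtain ⟨g, hg, hg0, hg1, hrange, hfib⟩ := exists_continuous_ordConnected_fibers γ.continuous
  let γ' : Path x y := ⟨⟨g, hg⟩, hg0.trans γ.source, hg1.trans γ.target⟩
  obtain ⟨δ, hδ, hδγ'⟩ := exists_injective_path_of_ordConnected_fibers γ' hfib hne
  exact ⟨δ, hδ, hδγ'.trans_subset hrange⟩

end Arcs

theorem injective_subpath {X : Type*} [TopologicalSpace X] {x y : X} {γ : Path x y}
    (hγ : Function.Injective γ) {s t : I} (hst : s ≠ t) :
    Function.Injective (γ.subpath s t) := by
  refine hγ.comp fun u v huv ↦ Subtype.ext ?_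
  have hval := congrArg Subtype.val huv
  rw [Icc.coe_convexComb, Icc.coe_convexComb] at hval
  have hne : (s : ℝ) - t ≠ 0 := sub_ne_zero.2 (Subtype.coe_injective.ne hst)
  exact mul_right_cancel₀ hne (by linear_combination -hval)

/-- The space `X` contains a homeomorphic copy of the circle. -/
def ContainsCircle (X : Type*) [TopologicalSpace X] : Prop :=
  ∃ f : Circle → X, Topology.IsEmbedding f

section Circles

variable {X : Type*} [TopologicalSpace X] [T2Space X] {x y : X}

theorem containsCircle_of_loop (γ : Path x x) (hγ : InjOn γ {1}ᶜ) : ContainsCircle X := by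
  have : Fact ((0 : ℝ) < 1) := ⟨one_pos⟩
  let f : AddCircle (1 : ℝ) → X := AddCircle.liftIco 1 0 γ.extend
  have hf : Continuous f := AddCircle.liftIco_zero_continuous
    (by rw [γ.extend_zero, γ.extend_one]) γ.continuous_extend.continuousOn
  have hcoe (t : I) (ht : (t : ℝ) < 1) : f ((t : ℝ) : AddCircle (1 : ℝ)) = γ t :=
    (AddCircle.liftIco_zero_coe_apply ⟨t.2.1, ht⟩).trans (γ.extend_apply t.2)
  have hlift (z : AddCircle (1 : ℝ)) :
      ∃ t : I, (t : ℝ) < 1 ∧ ((t : ℝ) : AddCircle (1 : ℝ)) = z := by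
    obtain ⟨t, ht, rfl⟩ := (AddCircle.coe_image_Ico_eq (1 : ℝ) 0).ge (mem_univ z)
    rw [zero_add] at ht
    exact ⟨⟨t, Ico_subset_Icc_self ht⟩, ht.2, rfl⟩
  have hinj : Function.Injective f := by
    intro z w hzw
    obtain ⟨s, hs, rfl⟩ := hlift z
    obtain ⟨t, ht, rfl⟩ := hlift w
    rw [hcoe s hs, hcoe t ht] at hzw
    have hne {u : I} (hu : (u : ℝ) < 1) : u ∈ ({1}ᶜ : Set I) := (show u < 1 from hu).ne
    rw [hγ (hne hs) (hne ht) hzw]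
  exact ⟨_, (hf.isClosedEmbedding hinj).isEmbedding.comp
    (AddCircle.homeomorphCircle one_ne_zero).symm.isEmbedding⟩

theorem containsCircle_of_range_inter_range_subset {γ : Path x y} {γ' : Path y x}
    (hγ : Function.Injective γ) (hγ' : Function.Injective γ')
    (h : range γ ∩ range γ' ⊆ {x, y}) : ContainsCircle X := by
  have hcross {s t : I} (hs : (s : ℝ) ≤ 1 / 2) (ht : 1 / 2 < (t : ℝ)) (ht1 : t ≠ 1) :
      γ.trans γ' s ≠ γ.trans γ' t := by
    rw [Path.trans_apply, Path.trans_apply, dif_pos hs, dif_neg ht.not_ge]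
    intro heq
    obtain hx | hy := h ⟨⟨_, heq⟩, mem_range_self _⟩
    · have := congrArg Subtype.val (hγ' (hx.trans γ'.target.symm))
      refine ht1 (Subtype.ext ?_)
      simp only [Icc.coe_one] at this ⊢
      linarith
    · have := congrArg Subtype.val (hγ' (hy.trans γ'.source.symm))
      simp only [Icc.coe_zero] at this
      linarith
  refine containsCircle_of_loop (γ.trans γ') fun s hs t ht heq ↦ ?_
  obtain hs2 | hs2 := le_or_gt (s : ℝ) (1 / 2) <;> obtain ht2 | ht2 := le_or_gt (t : ℝ) (1 / 2)
  · rw [Path.trans_apply, Path.trans_apply, dif_pos hs2, dif_pos ht2] at heq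
    have := congrArg Subtype.val (hγ heq)
    exact Subtype.ext (by linarith)
  · exact absurd heq (hcross hs2 ht2 ht)
  · exact absurd heq.symm (hcross ht2 hs2 hs)
  · rw [Path.trans_apply, Path.trans_apply, dif_neg hs2.not_ge, dif_neg ht2.not_ge] at heq
    have := congrArg Subtype.val (hγ' heq)
    exact Subtype.ext (by linarith)

theorem range_subset_range_of_injective (hX : ¬ ContainsCircle X) {γ δ : Path x y}
    (hγ : Function.Injective γ) (hδ : Function.Injective δ) : range γ ⊆ range δ := by
  rintro _ ⟨t, rfl⟩
  by_contra ht
  let K : Set I := γ ⁻¹' range δ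
  have hK : IsClosed K := (isCompact_range δ.continuous).isClosed.preimage γ.continuous
  have h0 : (0 : I) ∈ K := ⟨0, by rw [δ.source, γ.source]⟩
  have h1 : (1 : I) ∈ K := ⟨1, by rw [δ.target, γ.target]⟩
  have hne {u : I} (hu : u ∈ K) : u ≠ t := fun h ↦ ht (h ▸ hu)
  obtain ⟨s, ⟨⟨p, hp⟩, -⟩, u, ⟨⟨q, hq⟩, -⟩, hsu, hgap⟩ := exists_gap_of_inter_Icc_subset_union
    hK.isCompact isOpen_Iio isOpen_Ioi (Iio_disjoint_Ioi_same (a := t))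
    (fun r hr ↦ lt_or_gt_of_ne (hne hr.1)) ⟨h0, unitInterval.nonneg'.lt_of_ne (hne h0)⟩
    ⟨h1, unitInterval.le_one'.lt_of_ne (hne h1).symm⟩ zero_le_one
  have hqp : q ≠ p := by
    rintro rfl
    exact hsu.ne (hγ (hp.symm.trans hq))
  refine hX (containsCircle_of_range_inter_range_subset (γ := γ.subpath s u)
    (γ' := (δ.subpath q p).cast hq.symm hp.symm) (injective_subpath hγ hsu.ne)
    (injective_subpath hδ hqp) ?_)
  rintro _ ⟨hr, v, rfl⟩
  rw [Path.range_subpath_of_le _ _ _ hsu.le] at hr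
  obtain ⟨r, hr, hrv⟩ := hr
  by_contra hr'
  have hrK : r ∈ K := ⟨_, hrv.symm⟩
  refine disjoint_left.1 hgap hrK ⟨hr.1.lt_of_ne ?_, hr.2.lt_of_ne ?_⟩
  · rintro rfl
    exact hr' (.inl hrv.symm)
  · rintro rfl
    exact hr' (.inr hrv.symm)

end Circles

section Unicoherence

/-- Every subcontinuum of `X` is unicoherent: if it is the union of two subcontinua, then their
intersection is connected. -/
def HereditarilyUnicoherent (X : Type*) [TopologicalSpace X] : Prop :=
  ∀ Z : Set X, IsCompact Z → IsConnected Z →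
    ∀ Y₁ Y₂ : Set X, IsCompact Y₁ → IsConnected Y₁ → IsCompact Y₂ → IsConnected Y₂ →
      Y₁ ⊆ Z → Y₂ ⊆ Z → Z = Y₁ ∪ Y₂ → IsConnected (Y₁ ∩ Y₂)

theorem joinedIn_of_isPreconnected {X : Type*} [TopologicalSpace X]
    [LocallyPathConnectedSpace X] {Y U : Set X} {x y : X} (hY : IsPreconnected Y) (hU : IsOpen U)
    (hYU : Y ⊆ U) (hx : x ∈ Y) (hy : y ∈ Y) : JoinedIn U x y := by
  have hUx : IsOpen (connectedComponentIn U x) := hU.connectedComponentIn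
  have hpath : IsPathConnected (connectedComponentIn U x) :=
    hUx.isConnected_iff_isPathConnected.1
      (isConnected_connectedComponentIn_iff.2 (hYU hx))
  exact (hpath.joinedIn x (mem_connectedComponentIn (hYU hx)) y
    (hY.subset_connectedComponentIn hx hYU hy)).mono (connectedComponentIn_subset U x)

variable {X : Type*} [MetricSpace X] [LocallyPathConnectedSpace X]

theorem range_subset_of_isPreconnected (hX : ¬ ContainsCircle X) {Y : Set X}
    (hY : IsPreconnected Y) {x y : X} (hx : x ∈ Y) (hy : y ∈ Y) {γ : Path x y}
    (hγ : Function.Injective γ) : range γ ⊆ Y := by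
  intro z hz
  by_contra hzY
  have hYz : Y ⊆ {z}ᶜ := subset_compl_singleton_iff.2 hzY
  have hne : x ≠ y := fun h ↦ zero_ne_one (hγ (γ.source.trans (h.trans γ.target.symm)))
  obtain ⟨β, hβ⟩ := joinedIn_of_isPreconnected hY isOpen_compl_singleton hYz hx hy
  obtain ⟨δ, hδ, hδβ⟩ := exists_injective_path β hne
  obtain ⟨t, rfl⟩ := hδβ (range_subset_range_of_injective hX hγ hδ hz)
  exact hβ t rfl

theorem isPreconnected_inter_of_not_containsCircle (hX : ¬ ContainsCircle X) {A B : Set X}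
    (hA : IsPreconnected A) (hB : IsPreconnected B) : IsPreconnected (A ∩ B) := by
  refine isPreconnected_of_forall_pair fun x hx y hy ↦ ?_
  obtain rfl | hne := eq_or_ne x y
  · exact ⟨{x}, singleton_subset_iff.2 hx, rfl, rfl, isPreconnected_singleton⟩
  obtain ⟨β, -⟩ := joinedIn_of_isPreconnected hA isOpen_univ (subset_univ A) hx.1 hy.1
  obtain ⟨γ, hγ, -⟩ := exists_injective_path β hne
  exact ⟨range γ, subset_inter (range_subset_of_isPreconnected hX hA hx.1 hy.1 hγ)
    (range_subset_of_isPreconnected hX hB hx.2 hy.2 hγ),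
    ⟨0, γ.source⟩, ⟨1, γ.target⟩, isPreconnected_range γ.continuous⟩

theorem hereditarilyUnicoherent_of_not_containsCircle (hX : ¬ ContainsCircle X) :
    HereditarilyUnicoherent X := by
  intro Z _ hZ Y₁ Y₂ hY₁c hY₁ hY₂c hY₂ h₁ h₂ hZeq
  obtain ⟨z, -, hz⟩ := isPreconnected_closed_iff.1 hZ.isPreconnected Y₁ Y₂ hY₁c.isClosed
    hY₂c.isClosed hZeq.le (by rw [inter_eq_right.2 h₁]; exact hY₁.nonempty)
    (by rw [inter_eq_right.2 h₂]; exact hY₂.nonempty)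
  exact ⟨⟨z, hz⟩, isPreconnected_inter_of_not_containsCircle hX hY₁.isPreconnected
    hY₂.isPreconnected⟩

end Unicoherence

section HalfCircles

theorem HereditarilyUnicoherent.of_isEmbedding {S X : Type*} [TopologicalSpace S]
    [TopologicalSpace X] {f : S → X} (hf : IsEmbedding f) (hX : HereditarilyUnicoherent X) :
    HereditarilyUnicoherent S := by
  intro Z hZc hZ Y₁ Y₂ hY₁c hY₁ hY₂c hY₂ h₁ h₂ hZeq
  have hf' {A : Set S} : ContinuousOn f A := hf.continuous.continuousOn
  have hconn := hX (f '' Z) (hZc.image hf.continuous) (hZ.image f hf') (f '' Y₁) (f '' Y₂)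
    (hY₁c.image hf.continuous) (hY₁.image f hf') (hY₂c.image hf.continuous) (hY₂.image f hf')
    (image_mono h₁) (image_mono h₂) (by rw [hZeq, image_union])
  rw [← image_inter hf.injective] at hconn
  exact ⟨hconn.nonempty.of_image, hf.isInducing.isPreconnected_image.1 hconn.isPreconnected⟩

theorem isConnected_circle_im_nonneg : IsConnected {z : Circle | 0 ≤ (z : ℂ).im} := by
  have himage : {z : Circle | 0 ≤ (z : ℂ).im} = Circle.exp '' Icc 0 Real.pi := by
    ext z
    refine ⟨fun hz ↦ ⟨_, ⟨Complex.arg_nonneg_iff.2 hz, Complex.arg_le_pi _⟩, Circle.exp_arg z⟩, ?_⟩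
    rintro ⟨t, ht, rfl⟩
    rw [mem_ofPred_eq, Circle.coe_exp, Complex.exp_ofReal_mul_I_im]
    exact Real.sin_nonneg_of_mem_Icc ht
  rw [himage]
  exact (isConnected_Icc Real.pi_pos.le).image _ Circle.exp.continuous.continuousOn

theorem isConnected_circle_im_nonpos : IsConnected {z : Circle | (z : ℂ).im ≤ 0} := by
  have himage : {z : Circle | (z : ℂ).im ≤ 0} = Inv.inv '' {z : Circle | 0 ≤ (z : ℂ).im} := by
    ext z
    simp only [image_inv_eq_inv, Set.mem_inv, mem_ofPred_eq, Circle.coe_inv_eq_conj,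
      Complex.conj_im, Left.nonneg_neg_iff]
  rw [himage]
  exact isConnected_circle_im_nonneg.image _ continuous_inv.continuousOn

theorem not_isPreconnected_circle_im_nonneg_inter_im_nonpos :
    ¬ IsPreconnected ({z : Circle | 0 ≤ (z : ℂ).im} ∩ {z : Circle | (z : ℂ).im ≤ 0}) := by
  intro h
  have hre := (h.image (fun z ↦ (z : ℂ).re) (by fun_prop)).Icc_subset
    ⟨-1, by simp, rfl⟩ ⟨1, by simp, rfl⟩
  obtain ⟨z, ⟨him, him'⟩, hz⟩ := hre (show (0 : ℝ) ∈ _ by simp)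
  exact z.coe_ne_zero (Complex.ext hz (le_antisymm him' him))

theorem not_hereditarilyUnicoherent_circle : ¬ HereditarilyUnicoherent Circle := by
  intro h
  have hnonneg : IsClosed {z : Circle | 0 ≤ (z : ℂ).im} :=
    isClosed_le continuous_const (by fun_prop)
  have hnonpos : IsClosed {z : Circle | (z : ℂ).im ≤ 0} :=
    isClosed_le (by fun_prop) continuous_const
  have hcover : univ = {z : Circle | 0 ≤ (z : ℂ).im} ∪ {z : Circle | (z : ℂ).im ≤ 0} :=
    (eq_univ_of_forall fun z : Circle ↦ le_total 0 (z : ℂ).im).symm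
  have huniv : IsConnected (univ : Set Circle) :=
    hcover ▸ isConnected_circle_im_nonneg.union ⟨1, by simp⟩ isConnected_circle_im_nonpos
  exact not_isPreconnected_circle_im_nonneg_inter_im_nonpos <| IsConnected.isPreconnected <|
    h univ isCompact_univ huniv _ _ hnonneg.isCompact isConnected_circle_im_nonneg
      hnonpos.isCompact isConnected_circle_im_nonpos (subset_univ _) (subset_univ _) hcover

end HalfCircles

theorem stmt_4_general {X : Type*} [MetricSpace X] [CompleteSpace X] [LocallyConnectedSpace X] :
    ¬ ContainsCircle X ↔ HereditarilyUnicoherent X := by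
  have : LocallyPathConnectedSpace X := locallyPathConnectedSpace_of_completeSpace
  refine ⟨hereditarilyUnicoherent_of_not_containsCircle, ?_⟩
  rintro hX ⟨f, hf⟩
  exact not_hereditarilyUnicoherent_circle (hX.of_isEmbedding hf)

/-- A Peano continuum is a dendrite iff it is hereditarily unicoherent. -/
theorem stmt_4 {X : Type} [MetricSpace X] [CompactSpace X] [ConnectedSpace X]
    [LocallyConnectedSpace X] :
    (¬ ∃ f : Circle → X, Topology.IsEmbedding f) ↔
      (∀ Z : Set X, IsCompact Z → IsConnected Z →
        ∀ Y₁ Y₂ : Set X, IsCompact Y₁ → IsConnected Y₁ → IsCompact Y₂ → IsConnected Y₂ →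
          Y₁ ⊆ Z → Y₂ ⊆ Z → Z = Y₁ ∪ Y₂ → IsConnected (Y₁ ∩ Y₂)) :=
  stmt_4_general
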